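/- For the uniform distribution on [a,b] and any r ≥ 1, an N-tuple a = x_1 < x_2 < ⋯ < x_N = b satisfies the dual-quantization master equation (Δx_i)^r ∫_0^1 Ψ_r(z)dz = (Δx_{i+1})^r ∫_0^1 Ψ_r(1−z)dz for i = 2,…,N−1 if and only if x_i = a + (i−1)(b−a)/(N−1) for all i; i.e. the unique critical grid is the uniform grid. -/

import Mathlib

/-! Integrating by parts, `Ψ_r(z) = z^(r+1) + (1-z)^(r+1) - d/dz (z * (1-z)^r)`, and the last term
contributes nothing on `[0, 1]`; hence `∫ Ψ_r = 2 / (r + 2)`. Since this is nonzero and unchanged by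
the reflection `z ↦ 1 - z`, it cancels from the master equation, which becomes
`(Δx_i)^r = (Δx_{i+1})^r`, that is `Δx_i = Δx_{i+1}`: the grid is an arithmetic progression. -/

section ArithmeticProgression

theorem sub_eq_of_consecutive_sub_eq {G : Type*} [AddGroup G] {x : ℕ → G} {N : ℕ}
    (hx : ∀ i : ℕ, 2 ≤ i → i ≤ N - 1 → x i - x (i - 1) = x (i + 1) - x i)
    {i : ℕ} (hi : 1 ≤ i) (hiN : i < N) : x (i + 1) - x i = x 2 - x 1 := by
  induction i, hi using Nat.le_induction with
  | base => rfl
  | succ i hi ih => exact (hx (i + 1) (by lia) (by lia)).symm.trans (ih (by lia))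

theorem eq_add_mul_of_sub_eq {R : Type*} [Ring R] {x : ℕ → R} {N : ℕ} {d : R}
    (hx : ∀ i : ℕ, 1 ≤ i → i < N → x (i + 1) - x i = d)
    {i : ℕ} (hi : 1 ≤ i) (hiN : i ≤ N) : x i = x 1 + (i - 1 : R) * d := by
  induction i, hi using Nat.le_induction with
  | base => simp
  | succ i hi ih =>
    rw [← sub_add_cancel (x (i + 1)) (x i), hx i hi hiN, ih (by lia)]
    push_cast
    noncomm_ring

theorem consecutive_sub_eq_iff_eq_uniform {K : Type*} [Field K] [CharZero K] {x : ℕ → K} {N : ℕ}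
    (hN : 2 ≤ N) :
    (∀ i : ℕ, 2 ≤ i → i ≤ N - 1 → x i - x (i - 1) = x (i + 1) - x i) ↔
      ∀ i : ℕ, 1 ≤ i → i ≤ N → x i = x 1 + (i - 1 : K) * (x N - x 1) / (N - 1 : K) := by
  constructor
  · intro hx i hi hiN
    have affine {j : ℕ} (hj : 1 ≤ j) (hjN : j ≤ N) : x j = x 1 + (j - 1 : K) * (x 2 - x 1) :=
      eq_add_mul_of_sub_eq (fun _ ↦ sub_eq_of_consecutive_sub_eq hx) hj hjN
    have total : x N - x 1 = (N - 1 : K) * (x 2 - x 1) :=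
      sub_eq_of_eq_add' (affine (by lia) le_rfl)
    have hN_ne : (N - 1 : K) ≠ 0 := sub_ne_zero.2 (by norm_cast; lia)
    rw [affine hi hiN, total, mul_left_comm, mul_div_cancel_left₀ _ hN_ne]
  · intro hx i hi hiN
    rw [hx i (by lia) (by lia), hx (i - 1) (by lia) (by lia), hx (i + 1) (by lia) (by lia)]
    push_cast [show 1 ≤ i by lia]
    ring

end ArithmeticProgression

section DualQuantizationKernel

variable {r : ℝ}

/-- The function `Ψ_r` whose integral over `[0, 1]` weights the powers `(Δx_i)^r` in the master
equation of `L^r` dual quantization. -/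
noncomputable def dualQuantizationKernel (r z : ℝ) : ℝ :=
  (r - 1) * z * (1 - z) ^ r + z ^ (r + 1) + r * z ^ 2 * (1 - z) ^ (r - 1)

theorem intervalIntegrable_dualQuantizationKernel (hr : 0 < r) :
    IntervalIntegrable (dualQuantizationKernel r) MeasureTheory.volume 0 1 := by
  have singular : IntervalIntegrable (fun z : ℝ ↦ (1 - z) ^ (r - 1)) MeasureTheory.volume 0 1 := by
    simpa using (intervalIntegral.intervalIntegrable_rpow' (a := 1) (b := 0)
      (show -1 < r - 1 by linarith)).comp_sub_left 1
  have continuous_part : Continuous fun z : ℝ ↦ (r - 1) * z * (1 - z) ^ r + z ^ (r + 1) := by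
    fun_prop (disch := positivity)
  exact (continuous_part.intervalIntegrable 0 1).add
    (singular.continuousOn_mul (by fun_prop))

/-- A primitive of `Ψ_r` on `(0, 1)`. -/
noncomputable def dualQuantizationPrimitive (r z : ℝ) : ℝ :=
  (z ^ (r + 2) - (1 - z) ^ (r + 2)) / (r + 2) - z * (1 - z) ^ r

theorem continuous_dualQuantizationPrimitive (hr : 0 ≤ r) :
    Continuous (dualQuantizationPrimitive r) := by
  unfold dualQuantizationPrimitive
  fun_prop (disch := positivity)

theorem hasDerivAt_dualQuantizationPrimitive (hr : r + 2 ≠ 0) {z : ℝ} (hz : z ∈ Set.Ioo (0 : ℝ) 1) :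
    HasDerivAt (dualQuantizationPrimitive r) (dualQuantizationKernel r z) z := by
  have hz' : 0 < 1 - z := sub_pos.2 hz.2
  have deriv_reflected_rpow (p : ℝ) :
      HasDerivAt (fun w : ℝ ↦ (1 - w) ^ p) (-1 * p * (1 - z) ^ (p - 1)) z :=
    ((hasDerivAt_id z).const_sub 1).rpow_const (.inl hz'.ne')
  have deriv_rpow : HasDerivAt (fun w : ℝ ↦ w ^ (r + 2)) ((r + 2) * z ^ (r + 2 - 1)) z :=
    Real.hasDerivAt_rpow_const (.inl hz.1.ne')
  have rpow_r : (1 - z) ^ r = (1 - z) ^ (r - 1) * (1 - z) := by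
    rw [← Real.rpow_add_one hz'.ne', sub_add_cancel]
  have rpow_r_add_one : (1 - z) ^ (r + 1) = (1 - z) ^ (r - 1) * (1 - z) ^ 2 := by
    rw [Real.rpow_add_one hz'.ne', rpow_r]
    ring
  refine (((deriv_rpow.sub (deriv_reflected_rpow (r + 2))).div_const (r + 2)).sub
    ((hasDerivAt_id z).mul (deriv_reflected_rpow r))).congr_deriv ?_
  rw [dualQuantizationKernel, show r + 2 - 1 = r + 1 by ring, rpow_r_add_one, rpow_r, id]
  field_simp
  ring

theorem integral_dualQuantizationKernel (hr : 0 < r) :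
    ∫ z in (0 : ℝ)..1, dualQuantizationKernel r z = 2 / (r + 2) := by
  have hr' : r + 2 ≠ 0 := by positivity
  rw [intervalIntegral.integral_eq_sub_of_hasDerivAt_of_le zero_le_one
    (continuous_dualQuantizationPrimitive hr.le).continuousOn
    (fun _ ↦ hasDerivAt_dualQuantizationPrimitive hr')
    (intervalIntegrable_dualQuantizationKernel hr)]
  simp only [dualQuantizationPrimitive, sub_self, sub_zero, Real.one_rpow, Real.zero_rpow hr',
    Real.zero_rpow hr.ne']
  ring

end DualQuantizationKernel

theorem rpow_mul_integral_eq_rpow_mul_integral_reflect_iff {f : ℝ → ℝ}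
    (hf : ∫ z in (0 : ℝ)..1, f z ≠ 0) {r s t : ℝ} (hr : r ≠ 0) (hs : 0 ≤ s) (ht : 0 ≤ t) :
    s ^ r * ∫ z in (0 : ℝ)..1, f z = t ^ r * ∫ z in (0 : ℝ)..1, f (1 - z) ↔ s = t := by
  have reflect : ∫ z in (0 : ℝ)..1, f (1 - z) = ∫ z in (0 : ℝ)..1, f z := by
    simp only [intervalIntegral.integral_comp_sub_left, sub_self, sub_zero]
  rw [reflect, mul_left_inj' hf, Real.rpow_left_inj hs ht hr]

theorem stmt_19_general {r : ℝ} (hr : 0 < r) {N : ℕ} (hN : 2 ≤ N) {x : ℕ → ℝ}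
    (hmono : ∀ i : ℕ, 1 ≤ i → i < N → x i ≤ x (i + 1)) :
    (∀ i : ℕ, 2 ≤ i → i ≤ N - 1 →
        (x i - x (i - 1)) ^ r * ∫ z in (0 : ℝ)..1, dualQuantizationKernel r z
          = (x (i + 1) - x i) ^ r * ∫ z in (0 : ℝ)..1, dualQuantizationKernel r (1 - z))
      ↔ ∀ i : ℕ, 1 ≤ i → i ≤ N → x i = x 1 + (i - 1 : ℝ) * (x N - x 1) / (N - 1 : ℝ) := by
  have integral_ne_zero : ∫ z in (0 : ℝ)..1, dualQuantizationKernel r z ≠ 0 := by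
    rw [integral_dualQuantizationKernel hr]
    positivity
  rw [← consecutive_sub_eq_iff_eq_uniform hN]
  refine forall₃_congr fun i hi hiN ↦
    rpow_mul_integral_eq_rpow_mul_integral_reflect_iff integral_ne_zero hr.ne' ?_ ?_
  · have left_le := hmono (i - 1) (by lia) (by lia)
    rw [Nat.sub_add_cancel (by lia)] at left_le
    exact sub_nonneg.2 left_le
  · exact sub_nonneg.2 (hmono i (by lia) (by lia))

open Real MeasureTheory intervalIntegral in
theorem stmt_19 (a b : ℝ) (hab : a < b) (r : ℝ) (hr : 1 ≤ r)
    (N : ℕ) (hN : 3 ≤ N) (Ψ : ℝ → ℝ)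
    (hΨ : ∀ z : ℝ, Ψ z = (r - 1) * z * (1 - z) ^ r + z ^ (r + 1) + r * z ^ 2 * (1 - z) ^ (r - 1))
    (x : ℕ → ℝ) (hx1 : x 1 = a) (hxN : x N = b)
    (hmono : ∀ i : ℕ, 1 ≤ i → i < N → x i < x (i + 1)) :
    (∀ i : ℕ, 2 ≤ i → i ≤ N - 1 →
        (x i - x (i - 1)) ^ r * ∫ z in (0:ℝ)..1, Ψ z
          = (x (i + 1) - x i) ^ r * ∫ z in (0:ℝ)..1, Ψ (1 - z))
      ↔ ∀ i : ℕ, 1 ≤ i → i ≤ N → x i = a + (i - 1 : ℝ) * (b - a) / (N - 1 : ℝ) := by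
  obtain rfl : Ψ = dualQuantizationKernel r := funext hΨ
  subst hx1 hxN
  exact stmt_19_general (by linarith) (by lia) fun i hi hiN ↦ (hmono i hi hiN).le
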